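/- arXiv:2111.04809 — 2 statements merged into one kernel-verified Lean document; each statement's English description precedes it below -/
import Mathlib

section
/- Let Δ ≥ 2 be an integer and let 𝒢 ⊆ 𝒢_Δ be a family of graphs of maximum degree at most Δ that is closed under taking induced subgraphs. Suppose there exist λ* > 0 and ε > 0 such that for every G ∈ 𝒢 and every λ ∈ 𝒩([0,λ*), ε) one has Z_G(λ) ≠ 0. Then for every λ ∈ (0, λ*] there exist constants r > 1 and C > 0 (depending only on Δ, λ*, ε, λ) such that the hard-core measure at λ satisfies strong spatial mixing on 𝒢 with exponential rate r and constant C. -/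
open Finset

noncomputable section

namespace HardCore

open scoped Classical

variable {V : Type*}

/-- `s` is an independent set in the graph `G`. -/
def IsInd (G : SimpleGraph V) (s : Finset V) : Prop :=
  ∀ u ∈ s, ∀ w ∈ s, ¬ G.Adj u w

/-- The independence polynomial of the subgraph of `G` induced on the vertex set `A`,
evaluated at `lam`:  `Z_{G[A]}(lam) = ∑_{I ⊆ A independent} lam^{|I|}`. -/
def Z (R : Type*) [Field R] [Fintype V] (G : SimpleGraph V) (A : Finset V) (lam : R) : R :=
  ∑ s ∈ A.powerset, if IsInd G s then lam ^ s.card else 0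

/-- The closed neighbourhood `N[v]` of a vertex `v` as a `Finset`. -/
def closedNbhd [Fintype V] (G : SimpleGraph V) (v : V) : Finset V :=
  univ.filter fun u => u = v ∨ G.Adj v u

/-- The ratio `P_{G[A],v}(lam) = lam * Z_{G[A] ∖ N[v]}(lam) / Z_{G[A]}(lam)` for the
subgraph of `G` induced on `A`. -/
def ratio {R : Type*} [Field R] [Fintype V] (G : SimpleGraph V) (A : Finset V) (v : V)
    (lam : R) : R :=
  lam * Z R G (A \ closedNbhd G v) lam / Z R G A lam

/-- `σ` is a valid boundary condition on `Λ`: the set of vertices of `Λ` set to `1`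
is independent in the subgraph of `G` induced by `Λ`. -/
def IsBC (G : SimpleGraph V) (Λ : Finset V) (σ : V → Bool) : Prop :=
  ∀ u ∈ Λ, ∀ w ∈ Λ, σ u = true → σ w = true → ¬ G.Adj u w

/-- An independent set `s` is compatible with the boundary condition `σ` on `Λ`:
`σ⁻¹(1) ⊆ s` and `σ⁻¹(0) ∩ s = ∅`. -/
def Compat (Λ : Finset V) (σ : V → Bool) (s : Finset V) : Prop :=
  ∀ u ∈ Λ, (u ∈ s ↔ σ u = true)

/-- The conditional probability `Pr_μ[v ∈ I ∣ σ]` that `v` belongs to the random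
independent set drawn from the hard-core measure at `lam`, conditioned on the
boundary condition `σ` on `Λ`. -/
def condProb [Fintype V] (G : SimpleGraph V) (lam : ℝ) (Λ : Finset V) (σ : V → Bool)
    (v : V) : ℝ :=
  (∑ s : Finset V, if IsInd G s ∧ Compat Λ σ s ∧ v ∈ s then lam ^ s.card else 0) /
  (∑ s : Finset V, if IsInd G s ∧ Compat Λ σ s then lam ^ s.card else 0)

/-- The hard-core measure on `G` at activity `lam` satisfies the strong spatial mixing
bound with constant `C` and exponential rate `r`:  for every vertex `v`, every
`Λ ⊆ V ∖ {v}` and any two boundary conditions `σ, τ` on `Λ`,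
`|Pr[v ∈ I ∣ σ] − Pr[v ∈ I ∣ τ]| ≤ C ⬝ r^{−d_G(v, σ ≠ τ)}`.
(The distance `d_G(v, σ ≠ τ)` is encoded by quantifying over all `d : ℕ` that are a
lower bound, in `ℕ∞`, for the distance from `v` to every vertex at which `σ, τ` differ.) -/
def SSM [Fintype V] (G : SimpleGraph V) (lam : ℝ) (C r : ℝ) : Prop :=
  ∀ (v : V) (Λ : Finset V), v ∉ Λ → ∀ σ τ : V → Bool, IsBC G Λ σ → IsBC G Λ τ →
    ∀ d : ℕ, (∀ u ∈ Λ, σ u ≠ τ u → (d : ℕ∞) ≤ G.edist v u) →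
      |condProb G lam Λ σ v - condProb G lam Λ τ v| ≤ C * r ^ (-(d : ℤ))

/-- `G` has maximum degree at most `Δ`. -/
def MaxDegLE [Fintype V] (G : SimpleGraph V) (Δ : ℕ) : Prop :=
  ∀ v : V, (univ.filter fun u => G.Adj v u).card ≤ Δ

/-- The vertex set of the graph `G[σ]`, i.e. the vertices of `V ∖ Λ` that are not
adjacent to any vertex of `Λ` that is set to `1` by `σ`. -/
def goodSet [Fintype V] (G : SimpleGraph V) (Λ : Finset V) (σ : V → Bool) : Finset V :=
  (univ \ Λ).filter fun u => ∀ w ∈ Λ, σ w = true → ¬ G.Adj w u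

end HardCore

namespace HardCore

/-- Vertices of a graph in a family: elements of a finite subset of `ℕ`. -/
abbrev Vtx (s : Finset ℕ) : Type := {x : ℕ // x ∈ s}

/-- The subgraph of `G` induced on a subset `t ⊆ s` of its vertices. -/
def inducedSub {s t : Finset ℕ} (h : t ⊆ s) (G : SimpleGraph (Vtx s)) : SimpleGraph (Vtx t) :=
  G.comap fun x => ⟨x.1, h x.2⟩

/-- The family `𝒢` of graphs is closed under taking induced subgraphs. -/
def ClosedUnderInduced (𝒢 : ∀ s : Finset ℕ, SimpleGraph (Vtx s) → Prop) : Prop :=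
  ∀ s G, 𝒢 s G → ∀ (t : Finset ℕ) (h : t ⊆ s), 𝒢 t (inducedSub h G)

end HardCore

namespace HardCore
open Metric in
/-- Logarithm of a non-vanishing holomorphic function on a disc. -/
lemma exists_log_ball {f : ℂ → ℂ} {c : ℂ} {ρ : ℝ} (hρ : 0 < ρ)
    (hf : DifferentiableOn ℂ f (ball c ρ)) (h0 : ∀ z ∈ ball c ρ, f z ≠ 0) :
    ∃ g : ℂ → ℂ, DifferentiableOn ℂ g (ball c ρ) ∧ ∀ z ∈ ball c ρ, Complex.exp (g z) = f z := by
  have hd : DifferentiableOn ℂ (fun z => deriv f z / f z) (ball c ρ) :=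
    (hf.deriv isOpen_ball).div hf h0
  obtain ⟨g, hgc, hg⟩ := hd.isExactOn_ball.with_val_at c (Complex.log (f c))
  have hcm : c ∈ ball c ρ := mem_ball_self hρ
  refine ⟨g, fun z hz => (hg z hz).differentiableAt.differentiableWithinAt, ?_⟩
  have hq : ∀ z ∈ ball c ρ, HasDerivAt (fun z => Complex.exp (- g z) * f z) 0 z := by
    intro z hz
    have h1 : HasDerivAt f (deriv f z) z :=
      (hf.differentiableAt (isOpen_ball.mem_nhds hz)).hasDerivAt
    have h2 := ((hg z hz).neg.cexp).mul h1
    have := h0 z hz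
    have e : Complex.exp ((-g) z) * -(deriv f z / f z) * f z + Complex.exp ((-g) z) * deriv f z
        = 0 := by
      field_simp
      ring
    rw [e] at h2
    exact h2
  intro z hz
  have hconst := (convex_ball c ρ).is_const_of_fderivWithin_eq_zero (𝕜 := ℂ)
    (f := fun z => Complex.exp (- g z) * f z)
    (fun z hz => (hq z hz).differentiableAt.differentiableWithinAt)
    (fun z hz => by
      rw [fderivWithin_of_isOpen isOpen_ball hz]
      ext
      simpa using (hq z hz).deriv) hz hcm
  simp only [hgc, Complex.exp_neg, Complex.exp_log (h0 c hcm)] at hconst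
  have := h0 c hcm
  have := Complex.exp_ne_zero (g z)
  field_simp at hconst
  exact hconst.symm

open Metric in
/-- A holomorphic function on a disc omitting `±1` is the cosine of a holomorphic function. -/
lemma exists_cos_ball {f : ℂ → ℂ} {c : ℂ} {ρ : ℝ} (hρ : 0 < ρ)
    (hf : DifferentiableOn ℂ f (ball c ρ)) (h1 : ∀ z ∈ ball c ρ, f z ≠ 1)
    (h2 : ∀ z ∈ ball c ρ, f z ≠ -1) :
    ∃ g : ℂ → ℂ, DifferentiableOn ℂ g (ball c ρ) ∧
      ∀ z ∈ ball c ρ, Complex.cos (Real.pi * g z) = f z := by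
  obtain ⟨u, hu, hue⟩ := exists_log_ball (f := fun z => 1 - f z ^ 2) hρ
    (by fun_prop) (fun z hz h => by
      have : (f z - 1) * (f z + 1) = 0 := by linear_combination -h
      rcases mul_eq_zero.1 this with h | h
      · exact h1 z hz (by linear_combination h)
      · exact h2 z hz (by linear_combination h))
  have hs : ∀ z ∈ ball c ρ, Complex.exp (u z / 2) ^ 2 = 1 - f z ^ 2 := by
    intro z hz
    rw [← hue z hz, ← Complex.exp_nat_mul]
    congr 1
    push_cast
    ring
  have hprod : ∀ z ∈ ball c ρ, (f z + Complex.I * Complex.exp (u z / 2)) *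
      (f z - Complex.I * Complex.exp (u z / 2)) = 1 := by
    intro z hz
    linear_combination (hs z hz) - Complex.exp (u z / 2) ^ 2 * Complex.I_sq
  obtain ⟨w, hw, hwe⟩ := exists_log_ball
    (f := fun z => f z + Complex.I * Complex.exp (u z / 2)) hρ
    (by fun_prop) (fun z hz h => by
      have := hprod z hz
      rw [h, zero_mul] at this
      exact zero_ne_one this)
  have hpi : (Real.pi : ℂ) ≠ 0 := by exact_mod_cast Real.pi_ne_zero
  refine ⟨fun z => -Complex.I * w z / Real.pi, by fun_prop, fun z hz => ?_⟩
  have e1 : (Real.pi : ℂ) * (-Complex.I * w z / Real.pi) = -Complex.I * w z := by field_simp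
  rw [e1, Complex.cos]
  have e2 : -Complex.I * w z * Complex.I = w z := by linear_combination -w z * Complex.I_sq
  have e3 : -(-Complex.I * w z) * Complex.I = - w z := by linear_combination w z * Complex.I_sq
  rw [e2, e3, Complex.exp_neg, hwe z hz]
  rw [inv_eq_of_mul_eq_one_right (hprod z hz)]
  ring

open Metric in
/-- Landau's lemma: quantitative open mapping. -/
lemma ball_subset_of_deriv_bound {f : ℂ → ℂ} {U : Set ℂ} (hU : IsOpen U)
    (hf : DifferentiableOn ℂ f U) {a : ℂ} {s : ℝ} (hs : 0 < s) (hsub : ball a s ⊆ U)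
    (hb : ∀ z ∈ ball a s, ‖deriv f z‖ ≤ 2 * ‖deriv f a‖) (h0 : deriv f a ≠ 0) :
    ball (f a) (‖deriv f a‖ * s / 24) ⊆ f '' ball a s := by
  have hda : 0 < ‖deriv f a‖ := norm_pos_iff.2 h0
  have ha : a ∈ ball a s := mem_ball_self hs
  have hd : DifferentiableOn ℂ (deriv f) (ball a s) := (hf.deriv hU).mono hsub
  have hmaps : Set.MapsTo (deriv f) (ball a s) (closedBall (deriv f a) (3 * ‖deriv f a‖)) := by
    intro z hz
    rw [mem_closedBall, dist_eq_norm]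
    linarith [norm_sub_le (deriv f z) (deriv f a), hb z hz]
  have hsmall : closedBall a (s / 6) ⊆ ball a s := closedBall_subset_ball (by linarith)
  have hder : ∀ z ∈ closedBall a (s / 6), ‖deriv f z - deriv f a‖ ≤ ‖deriv f a‖ / 2 := by
    intro z hz
    have := Complex.dist_le_div_mul_dist_of_mapsTo_ball hd hmaps (hsmall hz)
    rw [dist_eq_norm] at this
    rw [mem_closedBall] at hz
    refine this.trans ?_
    calc 3 * ‖deriv f a‖ / s * dist z a ≤ 3 * ‖deriv f a‖ / s * (s / 6) := by gcongr
      _ = ‖deriv f a‖ / 2 := by field_simp; norm_num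
  have hlip : ∀ z ∈ closedBall a (s / 6),
      ‖(f z - deriv f a * z) - (f a - deriv f a * a)‖ ≤ ‖deriv f a‖ / 2 * ‖z - a‖ := by
    intro z hz
    refine (convex_closedBall a (s / 6)).norm_image_sub_le_of_norm_hasDerivWithin_le
      (f := fun z => f z - deriv f a * z) (f' := fun z => deriv f z - deriv f a)
      (fun w hw => ?_) hder (mem_closedBall_self (by positivity)) hz
    have h1 : HasDerivAt f (deriv f w) w :=
      (hf.differentiableAt (hU.mem_nhds (hsub (hsmall hw)))).hasDerivAt
    have h2 := h1.sub ((hasDerivAt_id w).const_mul (deriv f a))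
    simp only [mul_one] at h2
    exact h2.hasDerivWithinAt
  have hdc : DiffContOnCl ℂ f (ball a (s / 6)) := by
    refine ⟨hf.mono (ball_subset_closedBall.trans (hsmall.trans hsub)), ?_⟩
    rw [closure_ball _ (by positivity)]
    exact (hf.mono (hsmall.trans hsub)).continuousOn
  have hsph : ∀ z ∈ sphere a (s / 6), ‖deriv f a‖ * s / 12 ≤ ‖f z - f a‖ := by
    intro z hz
    have h1 := hlip z (sphere_subset_closedBall hz)
    rw [mem_sphere, dist_eq_norm] at hz
    have h2 : ‖deriv f a * (z - a)‖ ≤ ‖f z - f a‖ +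
        ‖(f z - deriv f a * z) - (f a - deriv f a * a)‖ := by
      have := norm_sub_le (f z - f a) ((f z - deriv f a * z) - (f a - deriv f a * a))
      refine le_trans (le_of_eq ?_) this
      congr 1
      ring
    rw [norm_mul, hz] at h2
    rw [hz] at h1
    linarith
  have hne : ∃ᶠ z in nhds a, f z ≠ f a := by
    intro hcon
    have hev : f =ᶠ[nhds a] fun _ => f a := by
      filter_upwards [hcon] with z hz
      simpa using hz
    exact h0 (by rw [hev.deriv_eq]; simp)
  have := hdc.ball_subset_image_closedBall (by positivity) hsph hne
  have e : ‖deriv f a‖ * s / 12 / 2 = ‖deriv f a‖ * s / 24 := by ring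
  rw [e] at this
  exact this.trans (Set.image_mono hsmall)

open Metric in
/-- Bloch's theorem. -/
lemma bloch {f : ℂ → ℂ} {U : Set ℂ} (hU : IsOpen U)
    (hf : DifferentiableOn ℂ f U) {c : ℂ} {ρ : ℝ} (hρ : 0 < ρ) (hsub : closedBall c ρ ⊆ U)
    {L : ℝ} (hL : 0 < L) (hom : ∀ w : ℂ, ∃ a, dist a w < L ∧ ∀ z ∈ U, f z ≠ a) :
    ‖deriv f c‖ ≤ 48 * L / ρ := by
  have hcont : ContinuousOn (fun z => ‖deriv f z‖ * (ρ - dist z c)) (closedBall c ρ) := by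
    have : ContinuousOn (deriv f) (closedBall c ρ) := ((hf.deriv hU).continuousOn).mono hsub
    fun_prop
  obtain ⟨a, ha, hmax⟩ := (isCompact_closedBall c ρ).exists_isMaxOn
    ⟨c, mem_closedBall_self hρ.le⟩ hcont
  have hmax' : ∀ z ∈ closedBall c ρ,
      ‖deriv f z‖ * (ρ - dist z c) ≤ ‖deriv f a‖ * (ρ - dist a c) := fun z hz => hmax hz
  by_contra hcon
  push Not at hcon
  have hc := hmax' c (mem_closedBall_self hρ.le)
  simp only [dist_self, sub_zero] at hc
  have hcon' : 48 * L < ‖deriv f c‖ * ρ := by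
    rwa [div_lt_iff₀ hρ] at hcon
  have hpos : 0 < ‖deriv f a‖ * (ρ - dist a c) := by linarith
  have hdpos : 0 < ρ - dist a c := by
    by_contra h
    have := mul_nonpos_of_nonneg_of_nonpos (norm_nonneg (deriv f a)) (not_lt.1 h)
    linarith
  have hd0 : deriv f a ≠ 0 := by
    intro h
    simp [h] at hpos
  set s := (ρ - dist a c) / 2 with hsdef
  have hs : 0 < s := by positivity
  have hball : ∀ z ∈ ball a s, dist z c < ρ - s := by
    intro z hz
    rw [mem_ball] at hz
    have := dist_triangle z a c
    have : dist a c = ρ - 2 * s := by rw [hsdef]; ring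
    linarith
  have hballsub : ball a s ⊆ U := fun z hz => hsub (by
    rw [mem_closedBall]; linarith [hball z hz])
  have himg := ball_subset_of_deriv_bound hU hf hs hballsub (fun z hz => by
    have h1 := hball z hz
    have h2 := hmax' z (by rw [mem_closedBall]; linarith)
    have h3 : ‖deriv f z‖ * s ≤ ‖deriv f z‖ * (ρ - dist z c) := by
      gcongr; linarith
    have h4 : ρ - dist a c = 2 * s := by rw [hsdef]; ring
    rw [h4] at h2
    have h5 : ‖deriv f z‖ * s ≤ (2 * ‖deriv f a‖) * s := by linarith
    exact le_of_mul_le_mul_right h5 hs) hd0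
  obtain ⟨b, hb, hbn⟩ := hom (f a)
  have hL' : L ≤ ‖deriv f a‖ * s / 24 := by
    have h4 : ρ - dist a c = 2 * s := by rw [hsdef]; ring
    rw [h4] at hc
    linarith
  obtain ⟨z, hz, hzb⟩ := himg (mem_ball.2 (hb.trans_le hL'))
  exact hbn z (hballsub hz) hzb

/-- The set of points with `cos (π cos (π a)) = ±1` is dense at scale `3`. -/
lemma exists_near_point (w : ℂ) : ∃ a : ℂ, dist a w < 3 ∧
    ∃ n : ℤ, Complex.cos (Real.pi * a) = n := by
  have hpi : 3 < Real.pi := Real.pi_gt_three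
  have key : ∀ t : ℝ, 0 ≤ t → ∃ s : ℝ, t ≤ s ∧ s ≤ t + 1 ∧ ∃ n : ℕ, Real.cosh (Real.pi * s) = n := by
    intro t ht
    have hc : Real.cosh (Real.pi * t) + 1 ≤ Real.cosh (Real.pi * (t + 1)) := by
      have h1 : Real.cosh (Real.pi * (t + 1)) = Real.cosh (Real.pi * t) * Real.cosh Real.pi +
          Real.sinh (Real.pi * t) * Real.sinh Real.pi := by
        rw [mul_add, mul_one, Real.cosh_add]
      have h2 : 0 ≤ Real.sinh (Real.pi * t) * Real.sinh Real.pi :=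
        mul_nonneg (Real.sinh_nonneg_iff.2 (by positivity)) (Real.sinh_nonneg_iff.2 (by positivity))
      have h3 : 1 ≤ Real.cosh (Real.pi * t) := Real.one_le_cosh _
      have h4 : 2 ≤ Real.cosh Real.pi := by
        rw [Real.cosh_eq]
        have := Real.add_one_le_exp Real.pi
        have := Real.exp_pos (-Real.pi)
        linarith
      nlinarith
    have hcont : ContinuousOn (fun s => Real.cosh (Real.pi * s)) (Set.Icc t (t + 1)) := by
      have := Real.continuous_cosh
      fun_prop
    have hmem : ((⌈Real.cosh (Real.pi * t)⌉₊ : ℕ) : ℝ) ∈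
        Set.Icc (Real.cosh (Real.pi * t)) (Real.cosh (Real.pi * (t + 1))) :=
      ⟨Nat.le_ceil _, by
        have := Nat.ceil_lt_add_one (a := Real.cosh (Real.pi * t)) (by positivity)
        linarith⟩
    obtain ⟨s, hs, hse⟩ := intermediate_value_Icc (by linarith) hcont hmem
    exact ⟨s, hs.1, hs.2, _, hse⟩
  have key2 : ∀ t : ℝ, ∃ s : ℝ, |s - t| ≤ 1 ∧ ∃ n : ℕ, Real.cosh (Real.pi * s) = n := by
    intro t
    rcases le_total 0 t with h | h
    · obtain ⟨s, h1, h2, h3⟩ := key t h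
      exact ⟨s, by rw [abs_le]; constructor <;> linarith, h3⟩
    · obtain ⟨s, h1, h2, n, h3⟩ := key (-t) (by linarith)
      exact ⟨-s, by rw [abs_le]; constructor <;> linarith, n, by
        rw [mul_neg, Real.cosh_neg, h3]⟩
  obtain ⟨s, hs, n, hn⟩ := key2 w.im
  refine ⟨(⌊w.re⌋ : ℝ) + s * Complex.I, ?_, ?_⟩
  · rw [dist_eq_norm]
    refine (Complex.norm_le_abs_re_add_abs_im _).trans_lt ?_
    have e1 : ((((⌊w.re⌋ : ℝ) : ℂ) + s * Complex.I) - w).re = ⌊w.re⌋ - w.re := by simp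
    have e2 : ((((⌊w.re⌋ : ℝ) : ℂ) + s * Complex.I) - w).im = s - w.im := by simp
    rw [e1, e2]
    have : |(⌊w.re⌋ : ℝ) - w.re| ≤ 1 := by
      rw [abs_le]
      constructor <;> linarith [Int.floor_le w.re, Int.lt_floor_add_one w.re]
    linarith
  · have e : (Real.pi : ℂ) * (((⌊w.re⌋ : ℝ) : ℂ) + s * Complex.I) =
        ((⌊w.re⌋ : ℤ) : ℂ) * Real.pi + ((Real.pi * s : ℝ) : ℂ) * Complex.I := by
      push_cast; ring
    rw [e, Complex.cos_add, Complex.sin_int_mul_pi, zero_mul, sub_zero, Complex.cos_mul_I,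
      ← Complex.ofReal_cosh, hn]
    have e2 : Complex.cos (((⌊w.re⌋ : ℤ) : ℂ) * Real.pi) = ((-1 : ℝ) ^ (⌊w.re⌋ : ℤ) : ℝ) := by
      rw [← Real.cos_int_mul_pi]
      push_cast
      rfl
    rw [e2]
    rcases Int.even_or_odd ⌊w.re⌋ with h | h
    · exact ⟨n, by rw [h.neg_one_zpow]; simp⟩
    · exact ⟨-n, by rw [h.neg_one_zpow]; simp⟩

lemma norm_cos_le (w : ℂ) : ‖Complex.cos w‖ ≤ Real.exp |w.im| := by
  rw [Complex.cos]
  rw [norm_div]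
  have h1 : ‖Complex.exp (w * Complex.I)‖ ≤ Real.exp |w.im| := by
    rw [Complex.norm_exp]
    gcongr
    simp [neg_le_abs]
  have h2 : ‖Complex.exp (-w * Complex.I)‖ ≤ Real.exp |w.im| := by
    rw [Complex.norm_exp]
    gcongr
    simp [le_abs_self]
  have := norm_add_le (Complex.exp (w * Complex.I)) (Complex.exp (-w * Complex.I))
  have h3 : ‖(2 : ℂ)‖ = 2 := by simp
  rw [h3]
  linarith

/-- If `cos w` is a real number in `(-1,1)`, then `w` is real. -/
lemma im_eq_zero_of_cos {w : ℂ} {x : ℝ} (hx : |x| < 1) (h : Complex.cos w = x) : w.im = 0 := by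
  have h1 : w = w.re + w.im * Complex.I := (Complex.re_add_im w).symm
  rw [h1, Complex.cos_add, Complex.cos_mul_I, Complex.sin_mul_I, ← Complex.ofReal_cos,
    ← Complex.ofReal_sin, ← Complex.ofReal_cosh, ← Complex.ofReal_sinh] at h
  have hre := congrArg Complex.re h
  have him := congrArg Complex.im h
  simp only [Complex.sub_re, Complex.sub_im, Complex.mul_re, Complex.mul_im, Complex.ofReal_re,
    Complex.ofReal_im, Complex.I_re, Complex.I_im] at hre him
  ring_nf at hre him
  have hm : Real.sin w.re * Real.sinh w.im = 0 := by linarith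
  rcases mul_eq_zero.1 hm with h0 | h0
  · exfalso
    have hc : Real.cos w.re ^ 2 = 1 := by
      have := Real.sin_sq_add_cos_sq w.re
      rw [h0] at this
      linarith
    have hch := Real.one_le_cosh w.im
    have hx2 : x ^ 2 < 1 := by
      rw [← sq_abs]
      nlinarith [abs_nonneg x]
    rw [← hre, mul_pow, hc] at hx2
    nlinarith
  · exact Real.sinh_eq_zero.1 h0

/-- The bound of Schottky's theorem at half the radius. -/
def schottkyBound : ℝ := Real.exp (Real.pi * Real.exp (Real.pi * 288))

open Metric in
/-- A version of Schottky's theorem: if `f` omits `0, 1` on a disc, and the value at the centre is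
a real number in `(0,1)`, then `f` is bounded by a universal constant on the disc with half the
radius. -/
lemma schottky {f : ℂ → ℂ} {c : ℂ} {ρ : ℝ} (hρ : 0 < ρ)
    (hf : DifferentiableOn ℂ f (ball c ρ)) (h0 : ∀ z ∈ ball c ρ, f z ≠ 0)
    (h1 : ∀ z ∈ ball c ρ, f z ≠ 1) {x : ℝ} (hx0 : 0 < x) (hx1 : x < 1) (hfc : f c = x)
    {z : ℂ} (hz : z ∈ ball c (ρ / 2)) : ‖f z‖ ≤ schottkyBound := by
  have hc : c ∈ ball c ρ := mem_ball_self hρ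
  obtain ⟨F, hF, hFe⟩ := exists_cos_ball (f := fun z => 2 * f z - 1) hρ (by fun_prop)
    (fun z hz h => h1 z hz (by linear_combination h / 2))
    (fun z hz h => h0 z hz (by linear_combination h / 2))
  have hFint : ∀ z ∈ ball c ρ, ∀ n : ℤ, F z ≠ n := by
    intro z hz n hn
    have h := hFe z hz
    rw [hn, mul_comm] at h
    have hsin := Complex.sin_sq_add_cos_sq ((n : ℂ) * Real.pi)
    rw [Complex.sin_int_mul_pi, h] at hsin
    have : (f z - 1) * f z = 0 := by linear_combination hsin / 4
    rcases mul_eq_zero.1 this with h' | h'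
    · exact h1 z hz (by linear_combination h')
    · exact h0 z hz h'
  have hFc : (F c).im = 0 := by
    have := im_eq_zero_of_cos (w := Real.pi * F c) (x := 2 * x - 1)
      (by rw [abs_lt]; constructor <;> linarith) (by rw [hFe c hc, hfc]; push_cast; ring)
    simpa [Real.pi_ne_zero] using this
  -- shift `F` so that its value at the centre lies in `(-1,1)`
  set k : ℤ := round ((F c).re / 2) with hk
  have hshift : ∀ z ∈ ball c ρ, Complex.cos (Real.pi * (F z - 2 * k)) = 2 * f z - 1 := by
    intro z hz
    rw [← hFe z hz, mul_sub]
    have e : (Real.pi : ℂ) * (2 * k) = k * (2 * Real.pi) := by ring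
    rw [e, Complex.cos_sub_int_mul_two_pi]
  have hF'int : ∀ z ∈ ball c ρ, ∀ n : ℤ, F z - 2 * k ≠ n := by
    intro z hz n hn
    refine hFint z hz (n + 2 * k) ?_
    push_cast
    linear_combination hn
  obtain ⟨g, hg, hge⟩ := exists_cos_ball (f := fun z => F z - 2 * k) hρ (by fun_prop)
    (fun z hz => by simpa using hF'int z hz 1) (fun z hz => by simpa using hF'int z hz (-1))
  have hgc : (g c).im = 0 := by
    have hreal : F c - 2 * k = (((F c).re - 2 * k : ℝ) : ℂ) := by
      apply Complex.ext <;> simp [hFc]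
    have hle : |(F c).re - 2 * k| ≤ 1 := by
      have := abs_sub_round ((F c).re / 2)
      rw [← hk] at this
      rw [abs_le] at this ⊢
      constructor <;> linarith [this.1, this.2]
    have hlt : |(F c).re - 2 * k| < 1 := by
      refine lt_of_le_of_ne hle fun h => ?_
      rcases (abs_eq zero_le_one).1 h with h | h
      · exact hF'int c hc 1 (by rw [hreal, h]; simp)
      · exact hF'int c hc (-1) (by rw [hreal, h]; simp)
    have := im_eq_zero_of_cos (w := Real.pi * g c) hlt (by rw [hge c hc, hreal])
    simpa [Real.pi_ne_zero] using this
  have hom : ∀ w : ℂ, ∃ a, dist a w < 3 ∧ ∀ z ∈ ball c ρ, g z ≠ a := by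
    intro w
    obtain ⟨a, ha, n, hn⟩ := exists_near_point w
    refine ⟨a, ha, fun z hz h => hF'int z hz n ?_⟩
    rw [← hge z hz, h, hn]
  have hder : ∀ w ∈ ball c (ρ / 2), ‖deriv g w‖ ≤ 48 * 3 / (ρ / 4) := by
    intro w hw
    refine bloch isOpen_ball hg (by positivity) ?_ (by norm_num) hom
    intro y hy
    rw [mem_closedBall] at hy
    rw [mem_ball] at hw ⊢
    linarith [dist_triangle y w c]
  have hdist : ‖g z - g c‖ ≤ 288 := by
    have hsub : ball c (ρ / 2) ⊆ ball c ρ := ball_subset_ball (by linarith)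
    have := (convex_ball c (ρ / 2)).norm_image_sub_le_of_norm_deriv_le
      (fun w hw => hg.differentiableAt (isOpen_ball.mem_nhds (hsub hw))) hder
      (mem_ball_self (by positivity)) hz
    refine this.trans ?_
    rw [mem_ball, dist_eq_norm] at hz
    calc 48 * 3 / (ρ / 4) * ‖z - c‖ ≤ 48 * 3 / (ρ / 4) * (ρ / 2) := by gcongr
      _ = 288 := by field_simp; norm_num
  have hzρ : z ∈ ball c ρ := ball_subset_ball (by linarith) hz
  have hgim : |(g z).im| ≤ 288 := by
    have := Complex.abs_im_le_norm (g z - g c)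
    rw [Complex.sub_im, hgc, sub_zero] at this
    linarith
  have hpi := Real.pi_pos
  have hFb : ‖F z - 2 * k‖ ≤ Real.exp (Real.pi * 288) := by
    rw [← hge z hzρ]
    refine (norm_cos_le _).trans ?_
    gcongr
    rw [Complex.im_ofReal_mul, abs_mul, abs_of_pos hpi]
    gcongr
  have hfb : ‖2 * f z - 1‖ ≤ schottkyBound := by
    rw [← hshift z hzρ]
    refine (norm_cos_le _).trans ?_
    unfold schottkyBound
    gcongr
    rw [Complex.im_ofReal_mul, abs_mul, abs_of_pos hpi]
    gcongr
    exact (Complex.abs_im_le_norm _).trans hFb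
  have hS : 1 ≤ schottkyBound := Real.one_le_exp (by positivity)
  have e : f z = ((2 * f z - 1) + 1) / 2 := by ring
  rw [e, norm_div]
  have := norm_add_le (2 * f z - 1) 1
  simp only [norm_one, Complex.norm_ofNat] at this ⊢
  linarith
end HardCore
namespace HardCore
open Metric Asymptotics in
/-- Decay from vanishing order, along the segment `[0, lam]`. -/
lemma analytic_decay {lam δ : ℝ} (hlam : 0 < lam) (hδ : 0 < δ) :
    ∃ t : ℝ, 0 < t ∧ t < 1 ∧ ∀ (h : ℂ → ℂ) (M : ℝ) (n : ℕ),
      (∀ z : ℂ, (∃ x : ℝ, 0 ≤ x ∧ x ≤ lam ∧ dist z x < δ) → DifferentiableAt ℂ h z ∧ ‖h z‖ ≤ M) →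
      h =O[nhds 0] (fun z : ℂ => z ^ n) → ‖h lam‖ ≤ M * t ^ n := by
  set c := δ / 4 with hc
  have hcpos : 0 < c := by positivity
  set s := 1 - Real.exp (-(lam / c)) with hs
  set α := 1 - Real.exp (-(lam / c) - 1) with hα
  have hs0 : 0 < s := by
    have hlc : 0 < lam / c := by positivity
    have : Real.exp (-(lam / c)) < Real.exp 0 := Real.exp_lt_exp.2 (by linarith)
    rw [Real.exp_zero] at this
    linarith
  have hsα : s < α := by
    have : Real.exp (-(lam / c) - 1) < Real.exp (-(lam / c)) := Real.exp_lt_exp.2 (by linarith)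
    linarith
  have hα1 : α < 1 := by
    have := Real.exp_pos (-(lam / c) - 1)
    linarith
  have hα0 : 0 < α := hs0.trans hsα
  refine ⟨s / α, by positivity, by rwa [div_lt_one hα0], ?_⟩
  intro h M n hU hO
  set φ : ℂ → ℂ := fun z => -c * Complex.log (1 - α * z) with hφ
  have hre : ∀ z ∈ ball (0 : ℂ) 1, 1 - α < (1 - (α : ℂ) * z).re := by
    intro z hz
    rw [mem_ball_zero_iff] at hz
    have h1 := (Complex.abs_re_le_norm z).trans_lt hz
    simp only [Complex.sub_re, Complex.one_re, Complex.re_ofReal_mul]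
    nlinarith [(abs_lt.1 h1).2]
  have hslit : ∀ z ∈ ball (0 : ℂ) 1, (1 - (α : ℂ) * z) ∈ Complex.slitPlane := by
    intro z hz
    exact Or.inl (by linarith [hre z hz])
  have hφd : ∀ z ∈ ball (0 : ℂ) 1, DifferentiableAt ℂ φ z := by
    intro z hz
    have := hslit z hz
    rw [hφ]
    fun_prop (disch := assumption)
  have hφ0 : φ 0 = 0 := by simp [hφ]
  have hφU : ∀ z ∈ ball (0 : ℂ) 1, ∃ x : ℝ, 0 ≤ x ∧ x ≤ lam ∧ dist (φ z) x < δ := by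
    intro z hz
    have hre' := hre z hz
    have hn1 : 1 - α ≤ ‖1 - (α : ℂ) * z‖ := hre'.le.trans (Complex.re_le_norm _)
    have hn2 : ‖1 - (α : ℂ) * z‖ ≤ 2 := by
      refine (norm_sub_le _ _).trans ?_
      rw [mem_ball_zero_iff] at hz
      rw [norm_one, norm_mul, Complex.norm_real, Real.norm_of_nonneg hα0.le]
      nlinarith [norm_nonneg z]
    have hl1 : -(lam / c) - 1 ≤ Real.log ‖1 - (α : ℂ) * z‖ := by
      rw [Real.le_log_iff_exp_le (by linarith)]
      linarith
    have hl2 : Real.log ‖1 - (α : ℂ) * z‖ ≤ 1 := by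
      have := Real.log_le_sub_one_of_pos (x := ‖1 - (α : ℂ) * z‖) (by linarith)
      linarith
    have hphire : (φ z).re = -c * Real.log ‖1 - (α : ℂ) * z‖ := by
      rw [hφ]
      simp [Complex.log_re]
    have hphiim : (φ z).im = -c * Complex.arg (1 - (α : ℂ) * z) := by
      rw [hφ]
      simp [Complex.log_im]
    have harg : |Complex.arg (1 - (α : ℂ) * z)| < 2 := by
      have := Complex.abs_arg_lt_pi_div_two_iff.2 (Or.inl (show 0 < (1 - (α : ℂ) * z).re by linarith))
      have := Real.pi_lt_four
      linarith
    have him : |(φ z).im| ≤ 2 * c := by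
      rw [hphiim, abs_mul, abs_neg, abs_of_pos hcpos]
      nlinarith
    have hr1 : -c ≤ (φ z).re := by rw [hphire]; nlinarith
    have hr2 : (φ z).re ≤ lam + c := by
      rw [hphire]
      have : c * (lam / c) = lam := by field_simp
      nlinarith
    refine ⟨max 0 (min lam (φ z).re), le_max_left _ _, max_le hlam.le (min_le_left _ _), ?_⟩
    rw [dist_eq_norm]
    refine (Complex.norm_le_abs_re_add_abs_im _).trans_lt ?_
    simp only [Complex.sub_re, Complex.sub_im, Complex.ofReal_re, Complex.ofReal_im, sub_zero]
    have : |(φ z).re - max 0 (min lam (φ z).re)| ≤ c := by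
      rw [abs_le]
      rcases le_total lam (φ z).re with h | h
      · rw [min_eq_left h, max_eq_right hlam.le]
        constructor <;> linarith
      · rw [min_eq_right h]
        rcases le_total 0 (φ z).re with h' | h'
        · rw [max_eq_right h']
          constructor <;> linarith
        · rw [max_eq_left h']
          constructor <;> linarith
    have : δ = 4 * c := by rw [hc]; ring
    linarith
  have hmem : ((s / α : ℝ) : ℂ) ∈ ball (0 : ℂ) 1 := by
    rw [mem_ball_zero_iff, Complex.norm_real, Real.norm_of_nonneg (by positivity)]
    rwa [div_lt_one hα0]
  have hval : φ ((s / α : ℝ) : ℂ) = lam := by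
    have e : (1 : ℂ) - α * ((s / α : ℝ) : ℂ) = ((Real.exp (-(lam / c)) : ℝ) : ℂ) := by
      have : (1 : ℝ) - α * (s / α) = Real.exp (-(lam / c)) := by
        rw [mul_div_cancel₀ _ hα0.ne']
        rw [hs]; ring
      rw [← this]
      push_cast
      ring
    simp only [hφ]
    rw [e, ← Complex.ofReal_log (Real.exp_pos _).le, Real.log_exp]
    have : -c * -(lam / c) = lam := by field_simp
    exact_mod_cast this
  rcases n with _ | m
  · have := (hU (φ ((s / α : ℝ) : ℂ)) (hφU _ hmem)).2
    rw [hval] at this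
    simpa using this
  · have h0 : (h ∘ φ) 0 = 0 := by
      simp only [Function.comp, hφ0]
      have hO' : h =O[nhds 0] (fun z : ℂ => ‖z - 0‖ ^ (m + 1)) := by
        simpa using hO.norm_right
      exact hO'.eq_zero_of_norm_pow (Nat.succ_ne_zero m)
    have hd : DifferentiableOn ℂ (h ∘ φ) (ball 0 1) := by
      intro z hz
      exact ((hU _ (hφU z hz)).1.comp z (hφd z hz)).differentiableWithinAt
    have hmaps : Set.MapsTo (h ∘ φ) (ball 0 1) (closedBall ((h ∘ φ) 0) M) := by
      intro z hz
      rw [h0, mem_closedBall_zero_iff]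
      exact (hU _ (hφU z hz)).2
    have hφO : φ =O[nhds 0] (fun z : ℂ => z) := by
      have := (hφd 0 (mem_ball_self one_pos)).isBigO_sub
      simpa [hφ0] using this
    have hφt : Filter.Tendsto φ (nhds 0) (nhds 0) := by
      have := (hφd 0 (mem_ball_self one_pos)).continuousAt.tendsto
      rwa [hφ0] at this
    have hO1 : (h ∘ φ) =O[nhds 0] (fun z : ℂ => z ^ (m + 1)) :=
      (hO.comp_tendsto hφt).trans (hφO.pow (m + 1))
    have hO2 : (fun w => (h ∘ φ) w - (h ∘ φ) 0) =o[nhds 0] (fun w : ℂ => ‖w - 0‖ ^ m) := by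
      simp only [h0, sub_zero]
      refine hO1.trans_isLittleO ?_
      have := (isLittleO_pow_pow (𝕜 := ℂ) (m := m) (n := m + 1) (by omega))
      simpa using this.norm_right
    have := Complex.dist_le_mul_div_pow_of_mapsTo_ball_of_isLittleO hd hmaps hO2 hmem
    rw [h0, dist_zero_right, dist_zero_right, Complex.norm_real,
      Real.norm_of_nonneg (by positivity)] at this
    simpa only [Function.comp, hval, div_one] using this
end HardCore
namespace HardCore
open scoped Classical

section Graph
variable {V : Type*} [Fintype V]

lemma Z_erase (R : Type*) [Field R] (G : SimpleGraph V) {A : Finset V} {v : V} (hv : v ∈ A)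
    (l : R) : Z R G A l = Z R G (A.erase v) l + l * Z R G (A \ closedNbhd G v) l := by
  unfold Z
  conv_lhs => rw [← insert_erase hv]
  rw [sum_powerset_insert (notMem_erase v A)]
  congr 1
  rw [mul_sum]
  symm
  have hsub : (A \ closedNbhd G v).powerset ⊆ (A.erase v).powerset := by
    rw [powerset_mono]
    intro u hu
    simp only [closedNbhd, mem_sdiff, mem_filter, mem_univ, true_and, not_or] at hu
    exact mem_erase.2 ⟨hu.2.1, hu.1⟩
  rw [← sum_subset hsub]
  · refine sum_congr rfl fun s hs => ?_
    rw [mem_powerset] at hs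
    have hvs : v ∉ s := fun h => by
      have := hs h
      simp [closedNbhd] at this
    have hadj : ∀ u ∈ s, ¬ G.Adj v u := fun u hu h => by
      have := hs hu
      simp [closedNbhd, h] at this
    have hiff : IsInd G (insert v s) ↔ IsInd G s := by
      constructor
      · intro h u hu w hw
        exact h u (mem_insert_of_mem hu) w (mem_insert_of_mem hw)
      · intro h u hu w hw
        rw [mem_insert] at hu hw
        rcases hu with rfl | hu <;> rcases hw with rfl | hw
        · exact G.irrefl
        · exact hadj w hw
        · exact fun h' => hadj u hu h'.symm
        · exact h u hu w hw
    simp only [hiff]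
    rw [card_insert_of_notMem hvs, pow_succ]
    split_ifs
    · ring
    · ring
  · intro s hs hns
    rw [mem_powerset] at hs hns
    rw [if_neg]
    intro h
    apply hns
    intro u hu
    have hu' := hs hu
    rw [mem_erase] at hu'
    simp only [closedNbhd, mem_sdiff, mem_filter, mem_univ, true_and, not_or]
    exact ⟨hu'.2, hu'.1, h v (mem_insert_self _ _) u (mem_insert_of_mem hu)⟩

lemma Z_ofReal (G : SimpleGraph V) (A : Finset V) (x : ℝ) :
    Z ℂ G A (x : ℂ) = ((Z ℝ G A x : ℝ) : ℂ) := by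
  unfold Z
  push_cast
  refine sum_congr rfl fun s _ => ?_
  split_ifs <;> simp

lemma Z_pos (G : SimpleGraph V) (A : Finset V) {x : ℝ} (hx : 0 < x) : 0 < Z ℝ G A x := by
  unfold Z
  refine sum_pos' (fun s _ => ?_) ⟨∅, empty_mem_powerset A, ?_⟩
  · split_ifs <;> positivity
  · rw [if_pos (by intro u hu; simp at hu)]
    simp

lemma Z_differentiable (G : SimpleGraph V) (A : Finset V) :
    Differentiable ℂ (fun z : ℂ => Z ℂ G A z) := by
  unfold Z
  refine Differentiable.fun_sum fun s _ => ?_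
  split_ifs <;> fun_prop

/-- The ratio `Z_{A - v} / Z_A`. -/
def rr (G : SimpleGraph V) (A : Finset V) (v : V) (z : ℂ) : ℂ :=
  Z ℂ G (A.erase v) z / Z ℂ G A z

/-- The open neighbourhood. -/
def nb (G : SimpleGraph V) (v : V) : Finset V := univ.filter fun u => G.Adj v u

lemma sdiff_closedNbhd (G : SimpleGraph V) (A : Finset V) (v : V) :
    A \ closedNbhd G v = A.erase v \ nb G v := by
  ext u
  simp only [closedNbhd, nb, mem_sdiff, mem_filter, mem_univ, true_and, mem_erase]
  tauto

lemma sdiff_insert_eq (A T : Finset V) (u : V) : A \ insert u T = (A \ T).erase u := by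
  ext w
  simp only [mem_sdiff, mem_insert, mem_erase]
  tauto

section fixedz
variable {G : SimpleGraph V} {z : ℂ}

lemma rr_of_notMem (hnz : ∀ A, Z ℂ G A z ≠ 0) {A : Finset V} {v : V} (hv : v ∉ A) : rr G A v z = 1 := by
  unfold rr
  rw [erase_eq_of_notMem hv, div_self (hnz A)]

/-- The basic recursion. -/
lemma rr_rec (hnz : ∀ A, Z ℂ G A z ≠ 0) {A : Finset V} {v : V} (hv : v ∈ A) :
    rr G A v z * (1 + z * (Z ℂ G (A.erase v \ nb G v) z / Z ℂ G (A.erase v) z)) = 1 := by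
  have h := Z_erase ℂ G hv z
  rw [sdiff_closedNbhd] at h
  have h1 := hnz A
  have h2 := hnz (A.erase v)
  unfold rr
  field_simp
  rw [h]

lemma quot_bound (hnz : ∀ A, Z ℂ G A z ≠ 0) {B : Finset V} (hB : ∀ C ⊆ B, ∀ u, ‖rr G C u z‖ ≤ 2) (T : Finset V) :
    ‖Z ℂ G (B \ T) z / Z ℂ G B z‖ ≤ 2 ^ T.card := by
  induction T using Finset.induction_on with
  | empty => simp [hnz B]
  | insert u T hu ih =>
    have e : Z ℂ G (B \ insert u T) z / Z ℂ G B z =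
        rr G (B \ T) u z * (Z ℂ G (B \ T) z / Z ℂ G B z) := by
      rw [sdiff_insert_eq]
      unfold rr
      have := hnz (B \ T)
      field_simp
    rw [e, norm_mul, card_insert_of_notMem hu, pow_succ, mul_comm]
    exact mul_le_mul ih (hB _ sdiff_subset _) (norm_nonneg _) (by positivity)

lemma rr_near {Δ : ℕ} (hnz : ∀ A, Z ℂ G A z ≠ 0) (hdeg : MaxDegLE G Δ)
    (hz : ‖z‖ * 2 ^ (Δ + 1) ≤ 1) (n : ℕ) : ∀ A : Finset V, A.card ≤ n → ∀ v, ‖rr G A v z‖ ≤ 2 := by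
  induction n with
  | zero =>
    intro A hA v
    have : A = ∅ := card_eq_zero.1 (by omega)
    rw [rr_of_notMem hnz (by simp [this])]
    simp
  | succ n ih =>
    intro A hA v
    by_cases hv : v ∈ A
    · have hc : (A.erase v).card ≤ n := by rw [card_erase_of_mem hv]; omega
      have hq := quot_bound hnz (B := A.erase v)
        (fun C hC u => ih C ((card_le_card hC).trans hc) u) (nb G v)
      have hq' : ‖Z ℂ G (A.erase v \ nb G v) z / Z ℂ G (A.erase v) z‖ ≤ 2 ^ Δ :=
        hq.trans (pow_le_pow_right₀ (by norm_num) (hdeg v))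
      have hrec := rr_rec hnz hv
      set q := Z ℂ G (A.erase v \ nb G v) z / Z ℂ G (A.erase v) z
      have h1 : ‖z * q‖ ≤ 1 / 2 := by
        rw [norm_mul]
        have : ‖z‖ * ‖q‖ ≤ ‖z‖ * 2 ^ Δ := by gcongr
        rw [pow_succ] at hz
        linarith
      have h2 : 1 / 2 ≤ ‖1 + z * q‖ := by
        have := norm_sub_le (1 + z * q) (z * q)
        rw [add_sub_cancel_right, norm_one] at this
        linarith
      have h3 := congrArg norm hrec
      rw [norm_mul, norm_one] at h3
      nlinarith [norm_nonneg (rr G A v z)]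
    · rw [rr_of_notMem hnz hv]
      simp

lemma rr_near' {Δ : ℕ} (hnz : ∀ A, Z ℂ G A z ≠ 0) (hdeg : MaxDegLE G Δ)
    (hz : ‖z‖ * 2 ^ (Δ + 1) ≤ 1) (A : Finset V) (v : V) : ‖rr G A v z‖ ≤ 2 :=
  rr_near hnz hdeg hz A.card A le_rfl v

lemma rr_diff {Δ : ℕ} (hnz : ∀ A, Z ℂ G A z ≠ 0) (hdeg : MaxDegLE G Δ)
    (hz : ‖z‖ * 2 ^ (Δ + 1) ≤ 1) (n : ℕ) : ∀ (A B : Finset V) (v : V),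
    (∀ u, G.edist v u < n → (u ∈ A ↔ u ∈ B)) →
    ‖rr G A v z - rr G B v z‖ ≤ 4 * (4 * Δ * 2 ^ Δ * ‖z‖) ^ n := by
  have hb := rr_near' hnz hdeg hz
  induction n with
  | zero =>
    intro A B v _
    have := norm_sub_le (rr G A v z) (rr G B v z)
    have := hb A v
    have := hb B v
    rw [pow_zero]
    linarith
  | succ n ih =>
    intro A B v hag
    have hv : v ∈ A ↔ v ∈ B := hag v (by simp)
    by_cases hvA : v ∈ A
    · have hvB := hv.1 hvA
      set D := 4 * (4 * Δ * 2 ^ Δ * ‖z‖) ^ n with hD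
      have hD0 : 0 ≤ D := by positivity
      have hT : ∀ T ⊆ nb G v, ‖Z ℂ G (A.erase v \ T) z / Z ℂ G (A.erase v) z -
          Z ℂ G (B.erase v \ T) z / Z ℂ G (B.erase v) z‖ ≤ T.card * 2 ^ T.card * D := by
        intro T
        induction T using Finset.induction_on with
        | empty => intro _; simp [hnz]
        | insert u T hu ihT =>
          intro hsub
          have hih := ihT ((subset_insert u T).trans hsub)
          have huv : G.Adj v u := by
            have := hsub (mem_insert_self u T)
            simpa [nb] using this
          have e : ∀ B : Finset V, Z ℂ G (B \ insert u T) z / Z ℂ G B z =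
              rr G (B \ T) u z * (Z ℂ G (B \ T) z / Z ℂ G B z) := by
            intro B
            rw [sdiff_insert_eq]
            unfold rr
            have := hnz (B \ T)
            field_simp
          rw [e, e]
          have hd := ih (A.erase v \ T) (B.erase v \ T) u (fun w hw => by
            have h1 : G.edist v w < (n + 1 : ℕ) := by
              have := G.edist_triangle (u := v) (v := u) (w := w)
              rw [SimpleGraph.edist_eq_one_iff_adj.2 huv] at this
              refine this.trans_lt ?_
              push_cast
              rw [add_comm]
              exact (ENat.add_lt_add_iff_right (by simp)).2 hw
            have h2 := hag w h1
            simp only [mem_sdiff, mem_erase, h2])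
          have hqA := quot_bound hnz (B := A.erase v) (fun C _ u => hb C u) T
          have hrB := hb (B.erase v \ T) u
          set a := rr G (A.erase v \ T) u z
          set b := rr G (B.erase v \ T) u z
          set p := Z ℂ G (A.erase v \ T) z / Z ℂ G (A.erase v) z
          set q := Z ℂ G (B.erase v \ T) z / Z ℂ G (B.erase v) z
          have e2 : a * p - b * q = (a - b) * p + b * (p - q) := by ring
          rw [e2, card_insert_of_notMem hu]
          refine (norm_add_le _ _).trans ?_
          rw [norm_mul, norm_mul]
          have h3 : ‖a - b‖ * ‖p‖ ≤ D * 2 ^ T.card :=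
            mul_le_mul hd hqA (norm_nonneg _) hD0
          have h4 : ‖b‖ * ‖p - q‖ ≤ 2 * (T.card * 2 ^ T.card * D) :=
            mul_le_mul hrB hih (norm_nonneg _) (by norm_num)
          have h5 : 0 ≤ D * 2 ^ T.card := by positivity
          push_cast
          rw [pow_succ]
          nlinarith
      have hd := hT (nb G v) Subset.rfl
      have hrA := rr_rec hnz hvA
      have hrB := rr_rec hnz hvB
      have hbA := hb A v
      have hbB := hb B v
      set a := rr G A v z
      set b := rr G B v z
      set p := Z ℂ G (A.erase v \ nb G v) z / Z ℂ G (A.erase v) z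
      set q := Z ℂ G (B.erase v \ nb G v) z / Z ℂ G (B.erase v) z
      have e : a - b = -(a * b * z * (p - q)) := by linear_combination b * hrA - a * hrB
      rw [e, norm_neg, norm_mul, norm_mul, norm_mul]
      have hcard : ((nb G v).card : ℝ) ≤ Δ := by exact_mod_cast hdeg v
      have hd' : ‖p - q‖ ≤ Δ * 2 ^ Δ * D := by
        refine hd.trans ?_
        gcongr
        · norm_num
        · exact hdeg v
      calc ‖a‖ * ‖b‖ * ‖z‖ * ‖p - q‖ ≤ 2 * 2 * ‖z‖ * (Δ * 2 ^ Δ * D) := by gcongr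
        _ = 4 * (4 * Δ * 2 ^ Δ * ‖z‖) ^ (n + 1) := by rw [hD, pow_succ]; ring
    · rw [rr_of_notMem hnz hvA, rr_of_notMem hnz (fun h => hvA (hv.2 h)), sub_self, norm_zero]
      positivity

end fixedz

/-- The conditional partition function. -/
lemma cond_sum (G : SimpleGraph V) (lam : ℝ) (Λ : Finset V) (σ : V → Bool) (hσ : IsBC G Λ σ)
    (D : Finset V) (hD : Disjoint D Λ) :
    (∑ s : Finset V, if IsInd G s ∧ Compat Λ σ s ∧ Disjoint D s then lam ^ s.card else 0) =
      lam ^ (Λ.filter fun u => σ u = true).card * Z ℝ G (goodSet G Λ σ \ D) lam := by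
  unfold Z
  rw [mul_sum, ← sum_filter]
  have : ∀ t ∈ (goodSet G Λ σ \ D).powerset,
      lam ^ (Λ.filter fun u => σ u = true).card * (if IsInd G t then lam ^ t.card else 0) =
      if IsInd G t then lam ^ (Λ.filter fun u => σ u = true).card * lam ^ t.card else 0 := by
    intro t _
    split_ifs <;> simp
  rw [sum_congr rfl this, ← sum_filter]
  set O := Λ.filter fun u => σ u = true with hO
  have hgood : ∀ t ⊆ goodSet G Λ σ \ D, Disjoint t Λ := by
    intro t ht
    rw [disjoint_left]
    intro u hu hu'
    have := ht hu
    simp only [goodSet, mem_sdiff, mem_filter, mem_univ, true_and] at this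
    exact this.1.1 hu'
  refine sum_nbij' (fun s => s \ Λ) (fun t => t ∪ O) ?_ ?_ ?_ ?_ ?_
  · intro s hs
    simp only [mem_filter, mem_univ, true_and] at hs
    obtain ⟨h1, h2, h3⟩ := hs
    simp only [mem_filter, mem_powerset]
    constructor
    · intro u hu
      rw [mem_sdiff] at hu
      simp only [goodSet, mem_sdiff, mem_filter, mem_univ, true_and]
      exact ⟨⟨hu.2, fun w hw hwσ => h1 w ((h2 w hw).2 hwσ) u hu.1⟩,
        fun h => (disjoint_left.1 h3 h) hu.1⟩
    · intro u hu w hw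
      exact h1 u (mem_sdiff.1 hu).1 w (mem_sdiff.1 hw).1
  · intro t ht
    simp only [mem_filter, mem_powerset] at ht
    obtain ⟨h1, h2⟩ := ht
    have hdis := hgood t h1
    have hcross : ∀ u ∈ t, ∀ w ∈ O, ¬ G.Adj w u := by
      intro u hu w hw
      have := h1 hu
      simp only [goodSet, mem_sdiff, mem_filter, mem_univ, true_and] at this
      rw [hO, mem_filter] at hw
      exact this.1.2 w hw.1 hw.2
    simp only [mem_filter, mem_univ, true_and]
    refine ⟨?_, ?_, ?_⟩
    · intro u hu w hw
      rw [mem_union] at hu hw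
      rcases hu with hu | hu <;> rcases hw with hw | hw
      · exact h2 u hu w hw
      · exact fun h => hcross u hu w hw h.symm
      · exact hcross w hw u hu
      · rw [hO, mem_filter] at hu hw
        exact hσ u hu.1 w hw.1 hu.2 hw.2
    · intro u hu
      have : u ∉ t := fun h => disjoint_left.1 hdis h hu
      simp [hO, hu, this]
    · rw [disjoint_left]
      intro u hu hu'
      rcases mem_union.1 hu' with h | h
      · exact (mem_sdiff.1 (h1 h)).2 hu
      · exact disjoint_left.1 hD hu (mem_filter.1 h).1
  · intro s hs
    simp only [mem_filter, mem_univ, true_and] at hs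
    ext u
    have := hs.2.1 u
    simp only [hO, mem_union, mem_sdiff, mem_filter]
    tauto
  · intro t ht
    simp only [mem_filter, mem_powerset] at ht
    have hdis := hgood t ht.1
    ext u
    have : u ∈ t → u ∉ Λ := fun h => disjoint_left.1 hdis h
    simp only [hO, mem_union, mem_sdiff, mem_filter]
    tauto
  · intro s hs
    simp only [mem_filter, mem_univ, true_and] at hs
    rw [← pow_add]
    congr 1
    have : O = s ∩ Λ := by
      ext u
      have := hs.2.1 u
      simp only [hO, mem_inter, mem_filter]
      tauto
    rw [this, add_comm, card_sdiff_add_card_inter]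

lemma condProb_eq (G : SimpleGraph V) {lam : ℝ} (hlam : 0 < lam) (Λ : Finset V) (σ : V → Bool)
    (hσ : IsBC G Λ σ) (v : V) (hv : v ∉ Λ) :
    ((condProb G lam Λ σ v : ℝ) : ℂ) = 1 - rr G (goodSet G Λ σ) v lam := by
  have h1 := cond_sum G lam Λ σ hσ ∅ (by simp)
  have h2 := cond_sum G lam Λ σ hσ {v} (by simpa using hv)
  simp only [disjoint_empty_left, and_true, sdiff_empty] at h1
  simp only [disjoint_singleton_left, sdiff_singleton_eq_erase] at h2
  have h3 : (∑ s : Finset V, if IsInd G s ∧ Compat Λ σ s ∧ v ∈ s then lam ^ s.card else 0) =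
      (∑ s : Finset V, if IsInd G s ∧ Compat Λ σ s then lam ^ s.card else 0) -
      (∑ s : Finset V, if IsInd G s ∧ Compat Λ σ s ∧ v ∉ s then lam ^ s.card else 0) := by
    rw [← sum_sub_distrib]
    refine sum_congr rfl fun s _ => ?_
    by_cases a : IsInd G s <;> by_cases b : Compat Λ σ s <;> by_cases c : v ∈ s <;> simp [a, b, c]
  unfold condProb rr
  rw [h3, h1, h2, Z_ofReal, Z_ofReal, ← mul_sub,
    mul_div_mul_left _ _ (pow_pos hlam _).ne', sub_div,
    div_self (Z_pos G (goodSet G Λ σ) hlam).ne']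
  push_cast
  rfl

lemma goodSet_agree (G : SimpleGraph V) (Λ : Finset V) (σ τ : V → Bool) (v : V) (n : ℕ)
    (h : ∀ u ∈ Λ, σ u ≠ τ u → ((n + 1 : ℕ) : ℕ∞) ≤ G.edist v u) (u : V) (hu : G.edist v u < n) :
    u ∈ goodSet G Λ σ ↔ u ∈ goodSet G Λ τ := by
  have key : ∀ w ∈ Λ, G.Adj w u → σ w = τ w := by
    intro w hw hwu
    by_contra hne
    have h1 := h w hw hne
    have h2 := G.edist_triangle (u := v) (v := u) (w := w)
    rw [SimpleGraph.edist_eq_one_iff_adj.2 hwu.symm] at h2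
    have h3 : G.edist v u + 1 < (n : ℕ∞) + 1 := (ENat.add_lt_add_iff_right (by simp)).2 hu
    push_cast at h1
    exact absurd (h1.trans h2) (not_le.2 h3)
  simp only [goodSet, mem_filter, mem_sdiff, mem_univ, true_and]
  refine and_congr_right fun _ => forall_congr' fun w => forall_congr' fun hw => ?_
  constructor
  · intro h1 h2 h3
    exact h1 (by rw [key w hw h3, h2]) h3
  · intro h1 h2 h3
    exact h1 (by rw [← key w hw h3, h2]) h3

/-- At a positive real point, the ratio is real and lies in `(0,1)`. -/
lemma rr_real (G : SimpleGraph V) {A : Finset V} {v : V} (hv : v ∈ A) {x : ℝ} (hx : 0 < x) :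
    ∃ y : ℝ, 0 < y ∧ y < 1 ∧ rr G A v x = y := by
  refine ⟨Z ℝ G (A.erase v) x / Z ℝ G A x, div_pos (Z_pos _ _ hx) (Z_pos _ _ hx), ?_, ?_⟩
  · rw [div_lt_one (Z_pos _ _ hx), Z_erase ℝ G hv]
    have := mul_pos hx (Z_pos G (A \ closedNbhd G v) hx)
    linarith
  · unfold rr
    rw [Z_ofReal, Z_ofReal]
    push_cast
    rfl

lemma rr_differentiableAt {G : SimpleGraph V} {z : ℂ} (hnz : ∀ A, Z ℂ G A z ≠ 0) (A : Finset V)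
    (v : V) : DifferentiableAt ℂ (rr G A v) z := by
  unfold rr
  exact (Z_differentiable G _).differentiableAt.fun_div
    (Z_differentiable G _).differentiableAt (hnz A)

open Metric in
/-- Uniform boundedness of the ratios. -/
lemma rr_bound {G : SimpleGraph V} {Δ : ℕ} (hdeg : MaxDegLE G Δ) {ε lamS : ℝ} (hε : 0 < ε)
    (hnz : ∀ z : ℂ, (∃ x : ℝ, 0 ≤ x ∧ x ≤ lamS ∧ dist z x ≤ ε) → ∀ A, Z ℂ G A z ≠ 0)
    {ρ : ℝ} (hρ : 0 < ρ) (hρε : ρ ≤ ε) (hρΔ : 2 * ρ * 2 ^ (Δ + 1) ≤ 1)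
    {z : ℂ} (hz : ∃ x : ℝ, 0 ≤ x ∧ x ≤ lamS ∧ dist z x < ρ / 2) (A : Finset V) (v : V) :
    ‖rr G A v z‖ ≤ schottkyBound + 2 := by
  have hS : 0 < schottkyBound := Real.exp_pos _
  obtain ⟨x, hx0, hx1, hzx⟩ := hz
  have hnzz := hnz z ⟨x, hx0, hx1, by linarith⟩
  by_cases hv : v ∈ A
  · rcases lt_or_ge x ρ with h | h
    · have hzn : ‖z‖ ≤ 2 * ρ := by
        have := dist_triangle z x 0
        rw [dist_zero_right, dist_zero_right, Complex.norm_real, Real.norm_of_nonneg hx0] at this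
        linarith
      have := rr_near' hnzz hdeg (le_trans (by gcongr) hρΔ) A v
      linarith
    · obtain ⟨y, hy0, hy1, hy⟩ := rr_real G hv (hρ.trans_le h)
      have hnzb : ∀ w ∈ ball (x : ℂ) ρ, ∀ A, Z ℂ G A w ≠ 0 := fun w hw =>
        hnz w ⟨x, hx0, hx1, by rw [mem_ball] at hw; linarith⟩
      have := schottky (f := rr G A v) (c := x) hρ
        (fun w hw => (rr_differentiableAt (hnzb w hw) A v).differentiableWithinAt)
        (fun w hw => div_ne_zero (hnzb w hw _) (hnzb w hw _))
        (fun w hw h1 => by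
          have hw0 : w ≠ 0 := by
            rintro rfl
            rw [mem_ball, dist_comm, dist_zero_right, Complex.norm_real,
              Real.norm_of_nonneg hx0] at hw
            linarith
          unfold rr at h1
          rw [div_eq_one_iff_eq (hnzb w hw _), Z_erase ℂ G hv w] at h1
          have h2 : w * Z ℂ G (A \ closedNbhd G v) w = 0 := by linear_combination -h1
          exact mul_ne_zero hw0 (hnzb w hw _) h2)
        hy0 hy1 hy (mem_ball.2 hzx)
      linarith
  · rw [rr_of_notMem hnzz hv, norm_one]
    linarith

open Asymptotics in
lemma rr_isBigO {G : SimpleGraph V} {Δ : ℕ} (hdeg : MaxDegLE G Δ) {ρ : ℝ} (hρ : 0 < ρ)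
    (hnz : ∀ z : ℂ, ‖z‖ < ρ → ∀ A, Z ℂ G A z ≠ 0) (hρΔ : ρ * 2 ^ (Δ + 1) ≤ 1)
    (A B : Finset V) (v : V) (n : ℕ) (hag : ∀ u, G.edist v u < n → (u ∈ A ↔ u ∈ B)) :
    (fun z => rr G A v z - rr G B v z) =O[nhds 0] (fun z : ℂ => z ^ n) := by
  refine IsBigO.of_bound (4 * (4 * Δ * 2 ^ Δ) ^ n) ?_
  filter_upwards [Metric.ball_mem_nhds (0 : ℂ) hρ] with z hz
  rw [mem_ball_zero_iff] at hz
  have := rr_diff (hnz z hz) hdeg (le_trans (by gcongr) hρΔ) n A B v hag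
  rw [mul_pow] at this
  rw [norm_pow]
  linarith

end Graph

/-- The partition function on a subset of vertices is the one of an induced subgraph. -/
lemma Z_inducedSub {s : Finset ℕ} (G : SimpleGraph (Vtx s)) (A : Finset (Vtx s)) (z : ℂ) :
    ∃ (t : Finset ℕ) (h : t ⊆ s), Z ℂ G A z = Z ℂ (inducedSub h G) Finset.univ z := by
  have hts : A.map (Function.Embedding.subtype _) ⊆ s := by
    intro x hx
    simp only [mem_map, Function.Embedding.subtype_apply] at hx
    obtain ⟨a, _, rfl⟩ := hx
    exact a.2
  refine ⟨A.map (Function.Embedding.subtype _), hts, ?_⟩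
  set t := A.map (Function.Embedding.subtype _) with ht
  let e : Vtx t ↪ Vtx s := ⟨fun x => ⟨x.1, hts x.2⟩, fun a b hab => by
    apply Subtype.ext
    simpa using hab⟩
  have heA : ∀ x, e x ∈ A := by
    intro x
    obtain ⟨a, ha, hax⟩ := mem_map.1 x.2
    have : e x = a := Subtype.ext hax.symm
    rwa [this]
  have heS : ∀ a ∈ A, ∃ x, e x = a := by
    intro a ha
    exact ⟨⟨a.1, by rw [ht, mem_map]; exact ⟨a, ha, rfl⟩⟩, rfl⟩
  unfold Z
  symm
  refine sum_bij (fun u _ => u.map e) ?_ ?_ ?_ ?_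
  · intro u _
    rw [mem_powerset]
    intro a ha
    obtain ⟨x, _, rfl⟩ := mem_map.1 ha
    exact heA x
  · intro u _ w _ h
    exact map_injective e h
  · intro u hu
    rw [mem_powerset] at hu
    refine ⟨univ.filter fun x => e x ∈ u, by simp, ?_⟩
    ext a
    simp only [mem_map, mem_filter, mem_univ, true_and]
    constructor
    · rintro ⟨x, hx, rfl⟩
      exact hx
    · intro ha
      obtain ⟨x, rfl⟩ := heS a (hu ha)
      exact ⟨x, ha, rfl⟩
  · intro u _
    rw [card_map]
    have : IsInd (inducedSub hts G) u ↔ IsInd G (u.map e) := by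
      unfold IsInd
      simp only [mem_map, forall_exists_index, and_imp, forall_apply_eq_imp_iff₂]
      rfl
    simp only [this]

end HardCore

namespace HardCore

/-- Let `Δ ≥ 2` and let `𝒢 ⊆ 𝒢_Δ` be a family of graphs of maximum degree
at most `Δ` closed under taking induced subgraphs.  Suppose there are `λ* > 0` and `ε > 0`
such that `Z_G(λ) ≠ 0` for every `G ∈ 𝒢` and every `λ` in the `ε`-neighbourhood
`𝒩([0,λ*), ε)` of `[0, λ*)` in `ℂ`.  Then for every `λ ∈ (0, λ*]` there exist `r > 1` and
`C > 0` such that the hard-core measure at `λ` satisfies strong spatial mixing on `𝒢` with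
exponential rate `r` and constant `C`. -/
theorem absence_of_zeros_implies_SSM_hardcore
    (Δ : ℕ) (hΔ : 2 ≤ Δ)
    (𝒢 : ∀ s : Finset ℕ, SimpleGraph (Vtx s) → Prop)
    (hdeg : ∀ s G, 𝒢 s G → MaxDegLE G Δ)
    (hclosed : ClosedUnderInduced 𝒢)
    (lamStar ε : ℝ) (hlamStar : 0 < lamStar) (hε : 0 < ε)
    (hzero : ∀ s G, 𝒢 s G → ∀ lam : ℂ,
      Metric.infDist lam ((fun x : ℝ => (x : ℂ)) '' Set.Ico 0 lamStar) ≤ ε →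
      Z ℂ G Finset.univ lam ≠ 0)
    (lam : ℝ) (hlam : lam ∈ Set.Ioc 0 lamStar) :
    ∃ r > 1, ∃ C > 0, ∀ s G, 𝒢 s G → SSM G lam C r := by
  classical
  obtain ⟨hl0, hl1⟩ := hlam
  -- zero-freeness for all vertex subsets
  have hnz : ∀ s G, 𝒢 s G → ∀ z : ℂ, (∃ x : ℝ, 0 ≤ x ∧ x ≤ lamStar ∧ dist z x ≤ ε) →
      ∀ A, Z ℂ G A z ≠ 0 := by
    intro s G hG z hz A
    obtain ⟨x, hx0, hx1, hzx⟩ := hz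
    obtain ⟨t, h, hZ⟩ := Z_inducedSub G A z
    rw [hZ]
    refine hzero t _ (hclosed s G hG t h) z ?_
    have hmem : (x : ℂ) ∈ closure ((fun x : ℝ => (x : ℂ)) '' Set.Ico 0 lamStar) := by
      have h1 : x ∈ closure (Set.Ico 0 lamStar) := by
        rw [closure_Ico hlamStar.ne]
        exact ⟨hx0, hx1⟩
      exact image_closure_subset_closure_image Complex.continuous_ofReal ⟨x, h1, rfl⟩
    rw [← Metric.infDist_closure]
    exact (Metric.infDist_le_dist_of_mem hmem).trans hzx
  -- the radius
  set ρ : ℝ := min ε (1 / (2 * 2 ^ (Δ + 1))) with hρdef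
  have hρ : 0 < ρ := lt_min hε (by positivity)
  have hρε : ρ ≤ ε := min_le_left _ _
  have hρΔ : 2 * ρ * 2 ^ (Δ + 1) ≤ 1 := by
    have h1 : ρ ≤ 1 / (2 * 2 ^ (Δ + 1)) := min_le_right _ _
    rw [le_div_iff₀ (by positivity)] at h1
    linarith
  obtain ⟨t, ht0, ht1, hdecay⟩ := analytic_decay hl0 (half_pos hρ)
  set M : ℝ := schottkyBound + 2 with hM
  have hMpos : 0 < M := by
    have : 0 < schottkyBound := Real.exp_pos _
    linarith
  refine ⟨t⁻¹, (one_lt_inv₀ ht0).2 ht1, 2 * M / t, by positivity, ?_⟩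
  intro s G hG v Λ hv σ τ hσ hτ d hd
  have hnzG := hnz s G hG
  have hdegG := hdeg s G hG
  set A := goodSet G Λ σ with hA
  set B := goodSet G Λ τ with hB
  have hbd : ∀ z : ℂ, (∃ x : ℝ, 0 ≤ x ∧ x ≤ lam ∧ dist z x < ρ / 2) →
      DifferentiableAt ℂ (fun z => rr G A v z - rr G B v z) z ∧
      ‖rr G A v z - rr G B v z‖ ≤ 2 * M := by
    rintro z ⟨x, hx0, hx1, hzx⟩
    have hz : ∃ x : ℝ, 0 ≤ x ∧ x ≤ lamStar ∧ dist z x < ρ / 2 := ⟨x, hx0, hx1.trans hl1, hzx⟩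
    have hzn := hnzG z ⟨x, hx0, hx1.trans hl1, by linarith⟩
    refine ⟨(rr_differentiableAt hzn A v).fun_sub (rr_differentiableAt hzn B v), ?_⟩
    have h1 := rr_bound hdegG hε hnzG hρ hρε hρΔ hz A v
    have h2 := rr_bound hdegG hε hnzG hρ hρε hρΔ hz B v
    have := norm_sub_le (rr G A v z) (rr G B v z)
    linarith
  have hdiff : |condProb G lam Λ σ v - condProb G lam Λ τ v| =
      ‖rr G A v lam - rr G B v lam‖ := by
    rw [← Real.norm_eq_abs, ← Complex.norm_real]
    push_cast
    rw [condProb_eq G hl0 Λ σ hσ v hv, condProb_eq G hl0 Λ τ hτ v hv, ← norm_neg]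
    congr 1
    ring
  have hr : (t⁻¹ : ℝ) ^ (-(d : ℤ)) = t ^ d := by
    rw [inv_zpow', neg_neg, zpow_natCast]
  rw [hdiff, hr]
  rcases d with _ | n
  · have h1 := (hbd lam ⟨lam, hl0.le, le_rfl, by simpa using hρ⟩).2
    refine h1.trans ?_
    rw [pow_zero, mul_one, le_div_iff₀ ht0]
    nlinarith
  · have hO := rr_isBigO hdegG hρ
      (fun z hz => hnzG z ⟨0, le_rfl, hlamStar.le, by
        simp only [Complex.ofReal_zero, dist_zero_right]; linarith⟩)
      (by
        have : 0 ≤ ρ * 2 ^ (Δ + 1) := by positivity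
        linarith) A B v n
      (fun u hu => goodSet_agree G Λ σ τ v n hd u hu)
    have h1 := hdecay _ (2 * M) n hbd hO
    refine h1.trans (le_of_eq ?_)
    rw [pow_succ]
    field_simp

end HardCore

end
end

section
/- Let q ≥ 2 be an integer, let A be a real symmetric q×q matrix, let G = (V,E) be a finite simple graph, let v ∈ V, i ∈ [q], and let σ and τ be two boundary conditions on a set Λ ⊆ V ∖ {v}, with d = d_G(v, σ≠τ). Then the rational functions z ↦ P^σ_{G,v,i;A}(z) and z ↦ P^τ_{G,v,i;A}(z) are holomorphic at z = 0 (their denominators at z = 0 equal q^{|V∖Λ|} ≠ 0), and their Taylor coefficients at z = 0 of every order ℓ with 0 ≤ ℓ ≤ d − 1 coincide. -/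
open Finset

noncomputable section

namespace GraphHom

open scoped Classical

variable {V : Type*} {q : ℕ}

/-- The weight of an (unordered) edge `e` under the coloring `ψ` and the matrix `B`.
For a symmetric matrix `B` and `e = {u,w}` this is exactly `B (ψ u) (ψ w)`. -/
def edgeWeight {R : Type*} [Field R] (B : Matrix (Fin q) (Fin q) R) (ψ : V → Fin q)
    (e : Sym2 V) : R :=
  Sym2.lift ⟨fun u w => (B (ψ u) (ψ w) + B (ψ w) (ψ u)) / 2, fun u w => by ring⟩ e

/-- The edges of `G` as a `Finset`. -/
def edges [Fintype V] (G : SimpleGraph V) : Finset (Sym2 V) :=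
  G.edgeSet.toFinite.toFinset

/-- The graph homomorphism partition function with boundary condition `σ` on `Λ`:
`Z^σ_G(B) = ∑_{ψ : V → [q], ψ|_Λ = σ|_Λ} ∏_{uv ∈ E} B_{ψ(u),ψ(v)}`. -/
def Zcond {R : Type*} [Field R] [Fintype V] (G : SimpleGraph V)
    (B : Matrix (Fin q) (Fin q) R) (Λ : Finset V) (σ : V → Fin q) : R :=
  ∑ ψ : V → Fin q, if ∀ u ∈ Λ, ψ u = σ u then ∏ e ∈ edges G, edgeWeight B ψ e else 0

/-- The interpolation matrix `J + z(A − J)`, i.e. the matrix with entries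
`1 + z(A_{ij} − 1)`, for a real matrix `A`. -/
def intMat (A : Matrix (Fin q) (Fin q) ℝ) (z : ℂ) : Matrix (Fin q) (Fin q) ℂ :=
  fun i j => 1 + z * ((A i j : ℂ) - 1)

/-- The ratio `P^σ_{G,v,i;A}(z) = Z^{σ_{v,i}}_G(J + z(A−J)) / Z^σ_G(J + z(A−J))`. -/
def ratio [Fintype V] (G : SimpleGraph V) (A : Matrix (Fin q) (Fin q) ℝ)
    (Λ : Finset V) (σ : V → Fin q) (v : V) (i : Fin q) (z : ℂ) : ℂ :=
  Zcond G (intMat A z) (insert v Λ) (Function.update σ v i) / Zcond G (intMat A z) Λ σ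

/-- The conditional probability `Pr_μ[Ψ(v) = i ∣ σ]` in the graph homomorphism measure
`μ_{G,A}`:  `Z^{σ_{v,i}}_G(A) / Z^σ_G(A)`. -/
def condProb [Fintype V] (G : SimpleGraph V) (A : Matrix (Fin q) (Fin q) ℝ)
    (Λ : Finset V) (σ : V → Fin q) (v : V) (i : Fin q) : ℝ :=
  Zcond G A (insert v Λ) (Function.update σ v i) / Zcond G A Λ σ

/-- `G` has maximum degree at most `Δ`. -/
def MaxDegLE [Fintype V] (G : SimpleGraph V) (Δ : ℕ) : Prop :=
  ∀ v : V, (univ.filter fun u => G.Adj v u).card ≤ Δ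

end GraphHom

namespace GraphHom
open scoped Classical

/-- The linear coefficient of the edge weight. -/
def lin (A : Matrix (Fin q) (Fin q) ℝ) : Matrix (Fin q) (Fin q) ℂ :=
  fun i j => (A i j : ℂ) - 1

lemma edgeWeight_intMat {V : Type*} {q : ℕ} (A : Matrix (Fin q) (Fin q) ℝ) (z : ℂ)
    (ψ : V → Fin q) (e : Sym2 V) :
    edgeWeight (intMat A z) ψ e = 1 + z * edgeWeight (lin A) ψ e := by
  induction e with
  | _ x y =>
    simp only [edgeWeight, intMat, lin, Sym2.lift_mk]
    ring

lemma Zcond_zero {V : Type*} [Fintype V] {q : ℕ} (A : Matrix (Fin q) (Fin q) ℝ)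
    (G : SimpleGraph V) (Λ : Finset V) (σ : V → Fin q) :
    Zcond G (intMat A 0) Λ σ = (q : ℂ) ^ (Finset.univ \ Λ).card := by
  have h1 : (Finset.univ.filter fun ψ : V → Fin q => ∀ u ∈ Λ, ψ u = σ u)
      = Fintype.piFinset (fun u => if u ∈ Λ then {σ u} else Finset.univ) := by
    ext ψ
    simp only [Finset.mem_filter, Finset.mem_univ, true_and, Fintype.mem_piFinset]
    refine forall_congr' fun u => ?_
    by_cases hu : u ∈ Λ <;> simp [hu]
  have h2 : (Finset.univ.filter fun ψ : V → Fin q => ∀ u ∈ Λ, ψ u = σ u).card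
      = q ^ (Finset.univ \ Λ).card := by
    rw [h1, Fintype.card_piFinset]
    have : ∀ u : V, (if u ∈ Λ then ({σ u} : Finset (Fin q)) else Finset.univ).card
        = if u ∈ Finset.univ \ Λ then q else 1 := by
      intro u
      by_cases hu : u ∈ Λ <;> simp [hu]
    rw [Finset.prod_congr rfl fun u _ => this u, Finset.prod_ite_mem]
    simp
  unfold Zcond
  simp only [edgeWeight_intMat, zero_mul, add_zero, Finset.prod_const_one]
  rw [Finset.sum_boole, h2]
  push_cast
  rfl

lemma Zcond_analytic {V : Type*} [Fintype V] {q : ℕ} (A : Matrix (Fin q) (Fin q) ℝ)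
    (G : SimpleGraph V) (Λ : Finset V) (σ : V → Fin q) :
    AnalyticAt ℂ (fun z => Zcond G (intMat A z) Λ σ) 0 := by
  unfold Zcond
  simp only [edgeWeight_intMat]
  refine Finset.analyticAt_fun_sum _ fun ψ _ => ?_
  split_ifs
  · refine Finset.analyticAt_fun_prod _ fun e _ => ?_
    fun_prop
  · exact analyticAt_const

lemma ratio_analytic {V : Type*} [Fintype V] {q : ℕ} (hq : 2 ≤ q)
    (A : Matrix (Fin q) (Fin q) ℝ) (v : V) (i : Fin q)
    (G : SimpleGraph V) (Λ : Finset V) (σ : V → Fin q) :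
    AnalyticAt ℂ (fun z => ratio G A Λ σ v i z) 0 := by
  refine (Zcond_analytic A G _ _).fun_div (Zcond_analytic A G _ _) ?_
  rw [Zcond_zero]
  have : (q : ℂ) ≠ 0 := by
    have : q ≠ 0 := by omega
    exact_mod_cast this
  exact pow_ne_zero _ this

/-- Swap two colorings on a set. -/
def swapOn {V : Type*} {q : ℕ} (C : Set V) (p : (V → Fin q) × (V → Fin q)) :
    (V → Fin q) × (V → Fin q) :=
  (fun u => if u ∈ C then p.2 u else p.1 u, fun u => if u ∈ C then p.1 u else p.2 u)

lemma swapOn_swapOn {V : Type*} {q : ℕ} (C : Set V) (p : (V → Fin q) × (V → Fin q)) :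
    swapOn C (swapOn C p) = p := by
  ext u <;> by_cases hu : u ∈ C <;> simp [swapOn, hu]

/-- The symmetric coefficient of an edge for a pair of colorings. -/
def pairW {V : Type*} {q : ℕ} (A : Matrix (Fin q) (Fin q) ℝ) (z : ℂ)
    (p : (V → Fin q) × (V → Fin q)) (e : Sym2 V) : ℂ :=
  edgeWeight (lin A) p.1 e + edgeWeight (lin A) p.2 e
    + z * (edgeWeight (lin A) p.1 e * edgeWeight (lin A) p.2 e)

lemma pairW_swapOn {V : Type*} {q : ℕ} (A : Matrix (Fin q) (Fin q) ℝ) (z : ℂ) (C : Set V)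
    (p : (V → Fin q) × (V → Fin q)) (x y : V) (h : x ∈ C ↔ y ∈ C) :
    pairW A z (swapOn C p) s(x, y) = pairW A z p s(x, y) := by
  by_cases hx : x ∈ C
  · have hy := h.1 hx
    simp only [pairW, edgeWeight, swapOn, Sym2.lift_mk, hx, hy, if_true]
    ring
  · have hy : y ∉ C := fun hy => hx (h.2 hy)
    simp only [pairW, edgeWeight, swapOn, Sym2.lift_mk, hx, hy, if_false]

/-- The signed indicator. -/
def sgnInd {V : Type*} {q : ℕ} (Λ : Finset V) (σ τ : V → Fin q) (v : V) (i : Fin q)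
    (p : (V → Fin q) × (V → Fin q)) : ℂ :=
  if (∀ u ∈ Λ, p.1 u = σ u) ∧ (∀ u ∈ Λ, p.2 u = τ u) then
    (if p.1 v = i then 1 else 0) - (if p.2 v = i then 1 else 0) else 0

lemma sgnInd_swapOn {V : Type*} {q : ℕ} (Λ : Finset V) (σ τ : V → Fin q) (v : V) (i : Fin q)
    (p : (V → Fin q) × (V → Fin q)) (C : Set V) (hvC : v ∈ C)
    (hC : ∀ u ∈ Λ, u ∈ C → σ u = τ u) :
    sgnInd Λ σ τ v i (swapOn C p) = - sgnInd Λ σ τ v i p := by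
  have h : ((∀ u ∈ Λ, (swapOn C p).1 u = σ u) ∧ (∀ u ∈ Λ, (swapOn C p).2 u = τ u)) ↔
      ((∀ u ∈ Λ, p.1 u = σ u) ∧ (∀ u ∈ Λ, p.2 u = τ u)) := by
    rw [← forall₂_and, ← forall₂_and]
    refine forall₂_congr fun u hu => ?_
    by_cases huC : u ∈ C
    · have := hC u hu huC
      simp only [swapOn, huC, if_true, this]
      exact and_comm
    · simp only [swapOn, huC, if_false]
  unfold sgnInd
  simp only [h]
  split_ifs with h1 <;> simp_all [swapOn]

/-- The contribution of an edge set. -/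
def contrib {V : Type*} [Fintype V] {q : ℕ} (A : Matrix (Fin q) (Fin q) ℝ)
    (Λ : Finset V) (σ τ : V → Fin q) (v : V) (i : Fin q) (F : Finset (Sym2 V)) (z : ℂ) : ℂ :=
  ∑ p : (V → Fin q) × (V → Fin q), sgnInd Λ σ τ v i p * ∏ e ∈ F, pairW A z p e

lemma contrib_eq_zero {V : Type*} [Fintype V] {q : ℕ} (A : Matrix (Fin q) (Fin q) ℝ)
    (G : SimpleGraph V) (Λ : Finset V) (σ τ : V → Fin q) (v : V) (i : Fin q) (d : ℕ)
    (hd : ∀ u ∈ Λ, σ u ≠ τ u → (d : ℕ∞) ≤ G.edist v u)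
    (F : Finset (Sym2 V)) (hF : F ⊆ edges G) (hFd : F.card < d) (z : ℂ) :
    contrib A Λ σ τ v i F z = 0 := by
  have hFG : ∀ e ∈ F, e ∈ G.edgeSet := fun e he => by
    simpa [edges] using hF he
  let H : SimpleGraph V := SimpleGraph.fromEdgeSet (F : Set (Sym2 V))
  have hHG : H ≤ G := by
    intro x y hxy
    have := (SimpleGraph.fromEdgeSet_adj _).1 hxy
    exact hFG _ this.1
  let C : Set V := {u | H.Reachable v u}
  have hvC : v ∈ C := SimpleGraph.Reachable.refl v
  have hC : ∀ u ∈ Λ, u ∈ C → σ u = τ u := by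
    intro u hu huC
    by_contra hne
    have h1 := hd u hu hne
    obtain ⟨p, hp⟩ := SimpleGraph.Reachable.exists_isPath huC
    have h2 : p.length ≤ F.card := by
      rw [← SimpleGraph.Walk.length_edges, ← List.toFinset_card_of_nodup hp.isTrail.edges_nodup]
      refine Finset.card_le_card fun e he => ?_
      have := p.edges_subset_edgeSet (List.mem_toFinset.1 he)
      rw [SimpleGraph.edgeSet_fromEdgeSet] at this
      exact this.1
    have h3 : G.edist v u ≤ (p.mapLe hHG).length := SimpleGraph.edist_le _
    have h4 : (p.mapLe hHG).length = p.length := by simp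
    rw [h4] at h3
    have h5 : d ≤ p.length := by exact_mod_cast h1.trans h3
    omega
  have key : contrib A Λ σ τ v i F z = - contrib A Λ σ τ v i F z := by
    conv_lhs => unfold contrib
    rw [contrib, ← Finset.sum_neg_distrib]
    let eqv : ((V → Fin q) × (V → Fin q)) ≃ ((V → Fin q) × (V → Fin q)) :=
      ⟨swapOn C, swapOn C, swapOn_swapOn C, swapOn_swapOn C⟩
    rw [← Equiv.sum_comp eqv]
    refine Finset.sum_congr rfl fun p _ => ?_
    change sgnInd Λ σ τ v i (swapOn C p) * ∏ e ∈ F, pairW A z (swapOn C p) e = _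
    rw [sgnInd_swapOn Λ σ τ v i p C hvC hC, neg_mul]
    congr 2
    refine Finset.prod_congr rfl fun e he => ?_
    induction e with
    | _ x y =>
      apply pairW_swapOn
      have hadj : H.Adj x y := (SimpleGraph.fromEdgeSet_adj _).2
        ⟨he, G.ne_of_adj (hFG _ he)⟩
      exact ⟨fun h => SimpleGraph.Reachable.trans h hadj.reachable,
        fun h => SimpleGraph.Reachable.trans h hadj.symm.reachable⟩
  exact self_eq_neg.1 key

lemma cross_eq {V : Type*} [Fintype V] {q : ℕ} (A : Matrix (Fin q) (Fin q) ℝ)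
    (G : SimpleGraph V) (Λ : Finset V) (v : V) (hv : v ∉ Λ) (σ τ : V → Fin q) (i : Fin q) (z : ℂ) :
    Zcond G (intMat A z) (insert v Λ) (Function.update σ v i) * Zcond G (intMat A z) Λ τ
      - Zcond G (intMat A z) Λ σ * Zcond G (intMat A z) (insert v Λ) (Function.update τ v i)
    = ∑ F ∈ (edges G).powerset, z ^ F.card * contrib A Λ σ τ v i F z := by
  have hnum : ∀ (σ ψ : V → Fin q), (∀ u ∈ insert v Λ, ψ u = Function.update σ v i u) ↔
      ((∀ u ∈ Λ, ψ u = σ u) ∧ ψ v = i) := by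
    intro σ ψ
    rw [Finset.forall_mem_insert, Function.update_self, and_comm]
    refine and_congr_left fun _ => forall₂_congr fun u hu => ?_
    rw [Function.update_of_ne]
    rintro rfl
    exact hv hu
  have hR : ∑ F ∈ (edges G).powerset, z ^ F.card * contrib A Λ σ τ v i F z
      = ∑ p : (V → Fin q) × (V → Fin q), sgnInd Λ σ τ v i p *
        ((∏ e ∈ edges G, edgeWeight (intMat A z) p.1 e) *
          ∏ e ∈ edges G, edgeWeight (intMat A z) p.2 e) := by
    simp only [contrib, Finset.mul_sum]
    rw [Finset.sum_comm]
    refine Finset.sum_congr rfl fun p _ => ?_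
    rw [← Finset.prod_mul_distrib]
    have : ∀ e, edgeWeight (intMat A z) p.1 e * edgeWeight (intMat A z) p.2 e
        = 1 + z * pairW A z p e := by
      intro e
      rw [edgeWeight_intMat, edgeWeight_intMat, pairW]
      ring
    simp only [this]
    rw [Finset.prod_one_add, Finset.mul_sum]
    refine Finset.sum_congr rfl fun F _ => ?_
    rw [Finset.prod_mul_distrib, Finset.prod_const]
    ring
  rw [hR]
  simp only [Zcond, hnum]
  rw [Finset.sum_mul_sum, Finset.sum_mul_sum, Fintype.sum_prod_type, ← Finset.sum_sub_distrib]
  refine Finset.sum_congr rfl fun ψ _ => ?_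
  rw [← Finset.sum_sub_distrib]
  refine Finset.sum_congr rfl fun φ _ => ?_
  simp only [sgnInd]
  have aux : ∀ (P1 P2 P3 P4 : Prop) (a b : ℂ),
      (if P1 ∧ P3 then a else 0) * (if P2 then b else 0)
        - (if P1 then a else 0) * (if P2 ∧ P4 then b else 0)
      = (if P1 ∧ P2 then (if P3 then 1 else 0) - (if P4 then 1 else 0) else 0) * (a * b) := by
    intro P1 P2 P3 P4 a b
    by_cases h1 : P1 <;> by_cases h2 : P2 <;> by_cases h3 : P3 <;> by_cases h4 : P4 <;>
      simp [h1, h2, h3, h4]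
  convert aux (∀ u ∈ Λ, ψ u = σ u) (∀ u ∈ Λ, φ u = τ u) (ψ v = i) (φ v = i) _ _

lemma contrib_analytic {V : Type*} [Fintype V] {q : ℕ} (A : Matrix (Fin q) (Fin q) ℝ)
    (Λ : Finset V) (σ τ : V → Fin q) (v : V) (i : Fin q) (F : Finset (Sym2 V)) :
    AnalyticAt ℂ (contrib A Λ σ τ v i F) 0 := by
  unfold contrib pairW
  refine Finset.analyticAt_fun_sum _ fun ψ _ => ?_
  refine analyticAt_const.fun_mul (Finset.analyticAt_fun_prod _ fun e _ => ?_)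
  fun_prop

/-- Let `A` be a real symmetric `q × q` matrix, `G` a finite graph,
`v ∉ Λ`, `i ∈ [q]`, and `σ, τ` two boundary conditions on `Λ` with `d = d_G(v, σ≠τ)`.
Then `z ↦ P^σ_{G,v,i;A}(z)` and `z ↦ P^τ_{G,v,i;A}(z)` are holomorphic at `z = 0`
(their denominators at `z = 0` equal `q^{|V∖Λ|} ≠ 0`), and their Taylor coefficients at
`0` of every order `ℓ ≤ d − 1` coincide. -/
theorem hom_ratio_coeffs_agree {V : Type*} [Fintype V] (q : ℕ) (hq : 2 ≤ q)
    (A : Matrix (Fin q) (Fin q) ℝ) (hA : ∀ i j, A i j = A j i)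
    (G : SimpleGraph V) (v : V) (i : Fin q) (Λ : Finset V) (hv : v ∉ Λ)
    (σ τ : V → Fin q) :
    Zcond G (intMat A 0) Λ σ = (q : ℂ) ^ (Finset.univ \ Λ).card ∧
    Zcond G (intMat A 0) Λ τ = (q : ℂ) ^ (Finset.univ \ Λ).card ∧
    AnalyticAt ℂ (fun z : ℂ => ratio G A Λ σ v i z) 0 ∧
    AnalyticAt ℂ (fun z : ℂ => ratio G A Λ τ v i z) 0 ∧
    ∀ d : ℕ, (∀ u ∈ Λ, σ u ≠ τ u → (d : ℕ∞) ≤ G.edist v u) →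
      ∀ l < d,
        iteratedDeriv l (fun z : ℂ => ratio G A Λ σ v i z) 0 =
        iteratedDeriv l (fun z : ℂ => ratio G A Λ τ v i z) 0 := by
  refine ⟨Zcond_zero A G Λ σ, Zcond_zero A G Λ τ, ratio_analytic hq A v i G Λ σ,
    ratio_analytic hq A v i G Λ τ, ?_⟩
  intro d hd l hl
  have haσ := ratio_analytic hq A v i G Λ σ
  have haτ := ratio_analytic hq A v i G Λ τ
  have hq0 : (q : ℂ) ≠ 0 := by
    have : q ≠ 0 := by omega
    exact_mod_cast this
  have hzσ : Zcond G (intMat A 0) Λ σ ≠ 0 := by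
    rw [Zcond_zero]; exact pow_ne_zero _ hq0
  have hzτ : Zcond G (intMat A 0) Λ τ ≠ 0 := by
    rw [Zcond_zero]; exact pow_ne_zero _ hq0
  have hord : (d : ℕ∞) ≤ analyticOrderAt
      (fun z => ratio G A Λ σ v i z - ratio G A Λ τ v i z) 0 := by
    rw [natCast_le_analyticOrderAt (haσ.fun_sub haτ)]
    refine ⟨fun z => (∑ F ∈ (edges G).powerset, z ^ (F.card - d) * contrib A Λ σ τ v i F z)
      / (Zcond G (intMat A z) Λ σ * Zcond G (intMat A z) Λ τ), ?_, ?_⟩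
    · refine AnalyticAt.fun_div ?_ ((Zcond_analytic A G Λ σ).fun_mul (Zcond_analytic A G Λ τ))
        (mul_ne_zero hzσ hzτ)
      refine Finset.analyticAt_fun_sum _ fun F _ => ?_
      exact (analyticAt_id.fun_pow _).fun_mul (contrib_analytic A Λ σ τ v i F)
    · filter_upwards [(Zcond_analytic A G Λ σ).continuousAt.eventually_ne hzσ,
        (Zcond_analytic A G Λ τ).continuousAt.eventually_ne hzτ] with z h1 h2
      rw [ratio, ratio, div_sub_div _ _ h1 h2, cross_eq A G Λ v hv σ τ i z, smul_eq_mul,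
        sub_zero, ← mul_div_assoc, Finset.mul_sum]
      congr 1
      refine Finset.sum_congr rfl fun F hF => ?_
      by_cases hFd : F.card < d
      · rw [contrib_eq_zero A G Λ σ τ v i d hd F (Finset.mem_powerset.1 hF) hFd]
        simp
      · rw [← mul_assoc, ← pow_add, Nat.add_sub_cancel' (not_lt.1 hFd)]
  have h0 := (natCast_le_analyticOrderAt_iff_iteratedDeriv_eq_zero (haσ.fun_sub haτ)).1 hord l hl
  rw [iteratedDeriv_fun_sub haσ.contDiffAt haτ.contDiffAt] at h0
  exact sub_eq_zero.1 h0

end GraphHom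

end
end
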